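/- arXiv:2404.06388 — 2 statements merged into one kernel-verified Lean document; each statement's English description precedes it below -/
import Mathlib

section
/- Let A, B ∈ SL(2,ℂ) satisfy A²B² = I. If tr(AB) ∈ {2, −2} and tr(A²) ∈ {2, −2}, then the triple (tr(A), tr(B), tr(AB)) is one of the six points (0,0,2), (0,0,−2), (2,2,2), (−2,−2,2), (2,−2,−2), (−2,2,−2). -/
open Matrix

/-- The trace of an element of `SL(2, ℂ)`, viewed as a matrix. -/
noncomputable def tr (A : Matrix.SpecialLinearGroup (Fin 2) ℂ) : ℂ :=
  Matrix.trace (A : Matrix (Fin 2) (Fin 2) ℂ)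

/-!
By Cayley–Hamilton, traces in `SL(2, R)` satisfy `tr(A²B) = tr(A) tr(AB) - tr(B)`. The relation
`A²B² = 1` says both `A²B = B⁻¹` and `A² = (B²)⁻¹`; taking traces gives `tr(A) tr(AB) = 2 tr(B)`
and `tr(A)² = tr(B)²`. Over a domain these two equations cut out the components
`tr(A) = tr(B) = 0` and `tr(B) = ± tr(A)`, `tr(AB) = ± 2` (equal signs), on which the values
of `tr(AB)` and `tr(A²) = tr(A)² - 2` leave only finitely many points.
-/

section

variable {R : Type*} [CommRing R]

theorem sq_eq_trace_smul_sub_det_smul_one (A : Matrix (Fin 2) (Fin 2) R) :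
    A ^ 2 = A.trace • A - A.det • 1 := by
  nontriviality R
  have cayley_hamilton : A ^ 2 - A.trace • A + A.det • 1 = 0 := by
    simpa [charpoly_fin_two, Algebra.smul_def] using aeval_self_charpoly A
  rw [← sub_eq_zero, ← cayley_hamilton]
  abel

theorem trace_sq_mul_fin_two (A B : Matrix (Fin 2) (Fin 2) R) :
    (A ^ 2 * B).trace = A.trace * (A * B).trace - A.det * B.trace := by
  simp only [sq_eq_trace_smul_sub_det_smul_one, sub_mul, smul_mul_assoc, one_mul, trace_sub,
    trace_smul, smul_eq_mul]

theorem trace_adjugate_fin_two (A : Matrix (Fin 2) (Fin 2) R) :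
    A.adjugate.trace = A.trace := by
  rw [adjugate_fin_two, trace_fin_two_of, trace_fin_two, add_comm]

theorem trace_inv_SL2 (A : SpecialLinearGroup (Fin 2) R) : (A⁻¹).1.trace = A.1.trace :=
  trace_adjugate_fin_two A.1

theorem trace_sq_SL2 (A : SpecialLinearGroup (Fin 2) R) :
    (A ^ 2).1.trace = A.1.trace ^ 2 - 2 := by
  simpa [sq] using trace_sq_mul_fin_two A.1 1

theorem trace_sq_eq_trace_sq_of_sq_mul_sq_eq_one {A B : SpecialLinearGroup (Fin 2) R}
    (hrel : A ^ 2 * B ^ 2 = 1) : A.1.trace ^ 2 = B.1.trace ^ 2 := by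
  have trace_eq : (A ^ 2).1.trace = (B ^ 2).1.trace := by
    rw [eq_inv_of_mul_eq_one_left hrel, trace_inv_SL2]
  simpa only [trace_sq_SL2, sub_left_inj] using trace_eq

theorem trace_mul_trace_mul_of_sq_mul_sq_eq_one {A B : SpecialLinearGroup (Fin 2) R}
    (hrel : A ^ 2 * B ^ 2 = 1) : A.1.trace * (A * B).1.trace = 2 * B.1.trace := by
  have sq_mul_eq_inv : A ^ 2 * B = B⁻¹ :=
    eq_inv_of_mul_eq_one_left (by rw [mul_assoc, ← sq, hrel])
  have trace_eq : B.1.trace = A.1.trace * (A * B).1.trace - B.1.trace := by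
    calc
      B.1.trace = (A ^ 2 * B).1.trace := by rw [sq_mul_eq_inv, trace_inv_SL2]
      _ = A.1.trace * (A * B).1.trace - B.1.trace := by
        simpa using trace_sq_mul_fin_two A.1 B.1
  linear_combination -trace_eq

variable [NoZeroDivisors R]

theorem trace_components_of_sq_mul_sq_eq_one {A B : SpecialLinearGroup (Fin 2) R}
    (hrel : A ^ 2 * B ^ 2 = 1) :
    (A.1.trace = 0 ∧ B.1.trace = 0) ∨
      (B.1.trace = A.1.trace ∧ (A * B).1.trace = 2) ∨
      (B.1.trace = -A.1.trace ∧ (A * B).1.trace = -2) := by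
  have sq_eq := trace_sq_eq_trace_sq_of_sq_mul_sq_eq_one hrel
  have mul_eq := trace_mul_trace_mul_of_sq_mul_sq_eq_one hrel
  by_cases trace_A : A.1.trace = 0
  · exact .inl ⟨trace_A, sq_eq_zero_iff.mp (by rw [← sq_eq, trace_A, zero_pow two_ne_zero])⟩
  right
  rcases sq_eq_sq_iff_eq_or_eq_neg.mp sq_eq.symm with trace_B | trace_B
  · exact .inl ⟨trace_B, mul_left_cancel₀ trace_A (by rw [mul_eq, trace_B, mul_comm])⟩
  · exact .inr ⟨trace_B, mul_left_cancel₀ trace_A (by rw [mul_eq, trace_B]; ring)⟩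

theorem trace_eq_zero_or_eq_two_or_eq_neg_two_of_trace_sq
    {A : SpecialLinearGroup (Fin 2) R}
    (hA : (A ^ 2).1.trace = 2 ∨ (A ^ 2).1.trace = -2) :
    A.1.trace = 0 ∨ A.1.trace = 2 ∨ A.1.trace = -2 := by
  rw [trace_sq_SL2] at hA
  rcases hA with eq_two | eq_neg_two
  · exact .inr (sq_eq_sq_iff_eq_or_eq_neg.mp (by linear_combination eq_two))
  · exact .inl (sq_eq_zero_iff.mp (by linear_combination eq_neg_two))

theorem klein_boundary_trace_classification_general (A B : SpecialLinearGroup (Fin 2) R)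
    (hrel : A ^ 2 * B ^ 2 = 1)
    (h1 : (A * B).1.trace = 2 ∨ (A * B).1.trace = -2)
    (h2 : (A ^ 2).1.trace = 2 ∨ (A ^ 2).1.trace = -2) :
    (A.1.trace, B.1.trace, (A * B).1.trace) ∈
      ({(0, 0, 2), (0, 0, -2), (2, 2, 2), (-2, -2, 2), (2, -2, -2), (-2, 2, -2)} :
        Set (R × R × R)) := by
  rcases trace_components_of_sq_mul_sq_eq_one hrel with
    ⟨trace_A, trace_B⟩ | ⟨trace_B, trace_AB⟩ | ⟨trace_B, trace_AB⟩
  · rcases h1 with trace_AB | trace_AB <;> rw [trace_A, trace_B, trace_AB] <;> simp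
  all_goals
    rcases trace_eq_zero_or_eq_two_or_eq_neg_two_of_trace_sq h2 with trace_A | trace_A | trace_A <;>
      rw [trace_B, trace_AB, trace_A] <;> simp

end

/-- If `A²B² = I` in `SL(2, ℂ)`, `tr(AB) = ±2` and `tr(A²) = ±2`, then
`(tr(A), tr(B), tr(AB))` is one of the six points `(0,0,±2)`,
`(±2, ±2, ±2)` with an even number of negative signs. -/
theorem klein_boundary_trace_classification
    (A B : Matrix.SpecialLinearGroup (Fin 2) ℂ)
    (hrel : A ^ 2 * B ^ 2 = 1)
    (h1 : tr (A * B) = 2 ∨ tr (A * B) = -2)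
    (h2 : tr (A ^ 2) = 2 ∨ tr (A ^ 2) = -2) :
    (tr A, tr B, tr (A * B)) ∈
      ({(0, 0, 2), (0, 0, -2), (2, 2, 2), (-2, -2, 2), (2, -2, -2), (-2, 2, -2)} :
        Set (ℂ × ℂ × ℂ)) :=
  klein_boundary_trace_classification_general A B hrel h1 h2
end

section
/- Let A, B, A', B' ∈ SL(2,ℂ) satisfy A²B² = I and A'²B'² = I, suppose both pairs (A, B) and (A', B') are irreducible (each pair has no common eigenvector in ℂ²), and suppose tr(AB) = tr(A'B'). Then the pairs are simultaneously conjugate: there exists an invertible 2×2 complex matrix P with A' = P·A·P⁻¹ and B' = P·B·P⁻¹. -/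
/-!
From `A² B² = 1` the square `A² = (B²)⁻¹` commutes with `B`. By Cayley-Hamilton,
`tr A • A = A² + det A`, so `tr A ≠ 0` would make `A` and `B` commute and hence share an
eigenvector. Thus `tr A = tr B = 0` and `A² = -det A` is a scalar `a`.
If `AB v = l v`, then irreducibility makes `(v, A v)` a basis, and in it `A` and `B` have matrices
depending only on `a` and `l`. The eigenvalues `l` of `AB` are in turn determined by `tr (AB)`,
since `det (AB) = 1`.
-/

open Matrix

/-- Two elements of `SL(2, ℂ)` share a common eigenvector. -/
def SharesEigenvector (A B : Matrix.SpecialLinearGroup (Fin 2) ℂ) : Prop :=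
  ∃ v : Fin 2 → ℂ, v ≠ 0 ∧ ∃ a b : ℂ,
    (A : Matrix (Fin 2) (Fin 2) ℂ).mulVec v = a • v ∧
    (B : Matrix (Fin 2) (Fin 2) ℂ).mulVec v = b • v

section Monoid

variable {S : Type*} [Monoid S] [IsDedekindFiniteMonoid S] {x y : S}

lemma commute_sq_of_sq_mul_sq_eq_one (h : x ^ 2 * y ^ 2 = 1) : Commute (x ^ 2) y := by
  let u : Sˣ := ⟨y ^ 2, x ^ 2, mul_eq_one_comm.mp h, h⟩
  have hu : Commute (u : S) y := Commute.pow_self y 2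
  exact hu.units_inv_left

lemma mul_mul_mul_eq_one_of_sq_mul_sq_eq_one (h : x ^ 2 * y ^ 2 = 1) :
    y * x * (x * y) = 1 := calc
  y * x * (x * y) = y * x ^ 2 * y := by simp only [sq, mul_assoc]
  _ = x ^ 2 * y * y := by rw [(commute_sq_of_sq_mul_sq_eq_one h).eq]
  _ = 1 := by rw [mul_assoc, ← sq, h]

end Monoid

section CommRing

variable {R n : Type*} [CommRing R] [Fintype n]

/-- The matrices `M` and `N` have a common eigenvector. For `2 × 2` matrices over an algebraically
closed field this says that the representation generated by `M` and `N` is reducible. -/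
def HaveCommonEigenvector (M N : Matrix n n R) : Prop :=
  ∃ v : n → R, v ≠ 0 ∧ ∃ a b : R, M *ᵥ v = a • v ∧ N *ᵥ v = b • v

lemma HaveCommonEigenvector.symm {M N : Matrix n n R} (h : HaveCommonEigenvector M N) :
    HaveCommonEigenvector N M := by
  obtain ⟨v, hv, a, b, hM, hN⟩ := h
  exact ⟨v, hv, b, a, hN, hM⟩

lemma trace_smul_eq_sq_add_det_smul_one (M : Matrix (Fin 2) (Fin 2) R) :
    M.trace • M = M ^ 2 + M.det • 1 := by
  nontriviality R
  have cayley_hamilton := M.aeval_self_charpoly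
  simp only [charpoly_fin_two, map_add, map_sub, map_mul, map_pow, Polynomial.aeval_X,
    Polynomial.aeval_C, Algebra.algebraMap_eq_smul_one, smul_one_mul] at cayley_hamilton
  rw [sub_add_eq_add_sub, sub_eq_zero] at cayley_hamilton
  exact cayley_hamilton.symm

lemma semiconjBy_transpose_of_pair {M : Matrix (Fin 2) (Fin 2) R} {v w : Fin 2 → R} {p q r s : R}
    (hv : M *ᵥ v = p • v + q • w) (hw : M *ᵥ w = r • v + s • w) :
    SemiconjBy (of ![v, w])ᵀ !![p, r; q, s] M := by
  rw [SemiconjBy, ← transpose_inj]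
  simp only [transpose_mul, transpose_transpose, cons_mul, vecMul_transpose, hv, hw, empty_mul,
    Equiv.symm_apply_apply]
  ext i j
  fin_cases i <;> simp [mul_apply]

lemma eq_mul_mul_inv_of_semiconjBy [DecidableEq n] {P : (Matrix n n R)ˣ} {M N : Matrix n n R}
    (h : SemiconjBy ↑P M N) : N = P * M * (P : Matrix n n R)⁻¹ := by
  rw [← coe_units_inv, Units.eq_mul_inv_iff_mul_eq, h.eq]

end CommRing

section Field

variable {K n : Type*} [Field K] [Fintype n]

lemma isUnit_transpose_of_pair {v w : Fin 2 → K} (hv : v ≠ 0) (h : ∀ c : K, c • v ≠ w) :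
    IsUnit (of ![v, w])ᵀ :=
  (isUnit_transpose _).mpr <| linearIndependent_rows_iff_isUnit.mp <|
    (LinearIndependent.pair_iff' hv).mpr h

lemma exists_mulVec_eq_smul_of_mem_spectrum [DecidableEq n] {M : Matrix n n K} {a : K}
    (ha : a ∈ spectrum K M) :
    ∃ v : n → K, v ≠ 0 ∧ M *ᵥ v = a • v := by
  rw [← spectrum_toLin', ← Module.End.hasEigenvalue_iff_mem_spectrum] at ha
  obtain ⟨v, hv⟩ := ha.exists_hasEigenvector
  exact ⟨v, hv.2, hv.apply_eq_smul⟩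

lemma haveCommonEigenvector_of_commute [IsAlgClosed K] [Nonempty n] {M N : Matrix n n K}
    (h : Commute M N) : HaveCommonEigenvector M N := by
  classical
  obtain ⟨a, ha⟩ := Module.End.exists_eigenvalue (toLin' M)
  have hcomm : Commute (toLin' M) (toLin' N) := h.map toLinAlgEquiv'
  have hmaps := Module.End.mapsTo_genEigenspace_of_comm hcomm a 1
  have : Nontrivial (Module.End.eigenspace (toLin' M) a) :=
    Submodule.nontrivial_iff_ne_bot.mpr ha
  obtain ⟨b, hb⟩ := Module.End.exists_eigenvalue ((toLin' N).restrict hmaps)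
  obtain ⟨v, hv⟩ := hb.exists_hasEigenvector
  exact ⟨v, by simpa using hv.2, a, b, Module.End.mem_eigenspace_iff.mp v.2,
    congrArg Subtype.val hv.apply_eq_smul⟩

lemma trace_eq_zero_of_commute_sq {M N : Matrix (Fin 2) (Fin 2) K} (hsq : Commute (M ^ 2) N)
    (h : ¬ Commute M N) : M.trace = 0 := by
  by_contra htr
  have hsmul : Commute (M.trace • M) N := by
    rw [trace_smul_eq_sq_add_det_smul_one]
    exact hsq.add_left ((Commute.one_left N).smul_left M.det)
  exact h ((Commute.smul_left_iff₀ htr).mp hsmul)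

lemma sq_eq_neg_det_smul_one [IsAlgClosed K] {M N : Matrix (Fin 2) (Fin 2) K}
    (hrel : M ^ 2 * N ^ 2 = 1) (hirr : ¬ HaveCommonEigenvector M N) :
    M ^ 2 = -M.det • 1 := by
  have htr : M.trace = 0 := trace_eq_zero_of_commute_sq (commute_sq_of_sq_mul_sq_eq_one hrel)
    fun h ↦ hirr (haveCommonEigenvector_of_commute h)
  have h := trace_smul_eq_sq_add_det_smul_one M
  rw [htr, zero_smul] at h
  rw [neg_smul, eq_neg_of_add_eq_zero_left h.symm]

lemma det_mul_det_eq_one [IsAlgClosed K] {M N : Matrix (Fin 2) (Fin 2) K}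
    (hrel : M ^ 2 * N ^ 2 = 1) (hirr : ¬ HaveCommonEigenvector M N) :
    M.det * N.det = 1 := by
  have hM := sq_eq_neg_det_smul_one hrel hirr
  have hN := sq_eq_neg_det_smul_one (mul_eq_one_comm.mp hrel) fun h ↦ hirr h.symm
  rw [hM, hN] at hrel
  simpa [mul_comm] using congrFun₂ hrel 0 0

lemma spectrum_eq_of_trace_eq_of_det_eq {M N : Matrix (Fin 2) (Fin 2) K}
    (htr : M.trace = N.trace) (hdet : M.det = N.det) : spectrum K M = spectrum K N := by
  ext a
  rw [mem_spectrum_iff_isRoot_charpoly, mem_spectrum_iff_isRoot_charpoly, charpoly_fin_two,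
    charpoly_fin_two, htr, hdet]

lemma exists_semiconjBy_of_sq_eq_smul_one {M N : Matrix (Fin 2) (Fin 2) K} {a l : K}
    (hrel : M ^ 2 * N ^ 2 = 1) (hirr : ¬ HaveCommonEigenvector M N) (hM : M ^ 2 = a • 1)
    (hl : l ∈ spectrum K (M * N)) :
    ∃ Q : (Matrix (Fin 2) (Fin 2) K)ˣ,
      SemiconjBy ↑Q !![0, a; 1, 0] M ∧ SemiconjBy ↑Q !![0, l⁻¹; a⁻¹ * l, 0] N := by
  obtain ⟨v, hv, hMNv⟩ := exists_mulVec_eq_smul_of_mem_spectrum hl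
  have ha : a ≠ 0 := by
    rintro rfl
    simp [hM] at hrel
  have hMMv : M *ᵥ M *ᵥ v = a • v := by
    rw [mulVec_mulVec, ← sq, hM, smul_mulVec, one_mulVec]
  have hNv : N *ᵥ v = (a⁻¹ * l) • M *ᵥ v := by
    have h : a • N *ᵥ v = l • M *ᵥ v := by
      rw [← mulVec_smul M, ← hMNv, mulVec_mulVec, ← mul_assoc, ← sq, hM, smul_one_mul, smul_mulVec]
    rw [mul_smul, ← h, inv_smul_smul₀ ha]
  have hNMv : N *ᵥ M *ᵥ v = l⁻¹ • v := by
    have h : l • N *ᵥ M *ᵥ v = v := by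
      rw [← mulVec_smul, ← mulVec_smul, ← hMNv, mulVec_mulVec, mulVec_mulVec,
        mul_mul_mul_eq_one_of_sq_mul_sq_eq_one hrel, one_mulVec]
    have hl₀ : l ≠ 0 := by
      rintro rfl
      exact hv (by rw [← h, zero_smul])
    exact (eq_inv_smul_iff₀ hl₀).mpr h
  have hQ : IsUnit (of ![v, M *ᵥ v])ᵀ := isUnit_transpose_of_pair hv fun c hc ↦
    hirr ⟨v, hv, c, a⁻¹ * l * c, hc.symm, by rw [hNv, ← hc, smul_smul]⟩
  exact ⟨hQ.unit, semiconjBy_transpose_of_pair (by simp) (by rw [hMMv, zero_smul, add_zero]),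
    semiconjBy_transpose_of_pair (by rw [hNv, zero_smul, zero_add])
      (by rw [hNMv, zero_smul, add_zero])⟩

theorem irreducible_klein_conj_of_eq_trace_general [IsAlgClosed K]
    {A B A' B' : Matrix (Fin 2) (Fin 2) K}
    (hrel : A ^ 2 * B ^ 2 = 1) (hrel' : A' ^ 2 * B' ^ 2 = 1)
    (hirr : ¬ HaveCommonEigenvector A B) (hirr' : ¬ HaveCommonEigenvector A' B')
    (hdet : A.det = A'.det) (htr : (A * B).trace = (A' * B').trace) :
    ∃ P : Matrix (Fin 2) (Fin 2) K, IsUnit P ∧ A' = P * A * P⁻¹ ∧ B' = P * B * P⁻¹ := by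
  have hspec : spectrum K (A * B) = spectrum K (A' * B') :=
    spectrum_eq_of_trace_eq_of_det_eq htr <| by
      rw [det_mul, det_mul, det_mul_det_eq_one hrel hirr, det_mul_det_eq_one hrel' hirr']
  obtain ⟨l, hl⟩ := spectrum.nonempty_of_isAlgClosed_of_finiteDimensional K (A * B)
  obtain ⟨Q, hQA, hQB⟩ :=
    exists_semiconjBy_of_sq_eq_smul_one hrel hirr (sq_eq_neg_det_smul_one hrel hirr) hl
  obtain ⟨Q', hQA', hQB'⟩ :=
    exists_semiconjBy_of_sq_eq_smul_one hrel' hirr' (sq_eq_neg_det_smul_one hrel' hirr')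
      (hspec ▸ hl)
  rw [← hdet] at hQA' hQB'
  exact ⟨↑(Q' * Q⁻¹), Units.isUnit _,
    eq_mul_mul_inv_of_semiconjBy (hQA'.mul_left hQA.units_inv_symm_left),
    eq_mul_mul_inv_of_semiconjBy (hQB'.mul_left hQB.units_inv_symm_left)⟩

end Field

/-- An irreducible representation of the Klein bottle group
`⟨s, t | s²t² = 1⟩` is determined up to conjugacy by `tr(st)`. -/
theorem irreducible_klein_conj_of_eq_trace
    (A B A' B' : Matrix.SpecialLinearGroup (Fin 2) ℂ)
    (hrel : A ^ 2 * B ^ 2 = 1) (hrel' : A' ^ 2 * B' ^ 2 = 1)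
    (hirr : ¬ SharesEigenvector A B) (hirr' : ¬ SharesEigenvector A' B')
    (htr : tr (A * B) = tr (A' * B')) :
    ∃ P : Matrix (Fin 2) (Fin 2) ℂ, IsUnit P ∧
      (A' : Matrix (Fin 2) (Fin 2) ℂ) = P * (A : Matrix (Fin 2) (Fin 2) ℂ) * P⁻¹ ∧
      (B' : Matrix (Fin 2) (Fin 2) ℂ) = P * (B : Matrix (Fin 2) (Fin 2) ℂ) * P⁻¹ :=
  irreducible_klein_conj_of_eq_trace_general (congrArg Subtype.val hrel)
    (congrArg Subtype.val hrel') hirr hirr' (A.det_coe.trans A'.det_coe.symm) htr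
end
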